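/- Let E be a real Banach space, let V : ℝ → E → E be a time-dependent vector field, and let c > 0, C > 0 be constants such that ‖V(t, x)‖ ≤ C·e^{−c·t} for all t ≥ 0 and all x ∈ E. Suppose φ : [0, ∞) × E → E is a flow of V, i.e. for each x ∈ E the curve t ↦ φ(t, x) is differentiable with ∂_t φ(t, x) = V(t, φ(t, x)) and φ(0, x) = x. Then there exists a map φ_∞ : E → E such that sup_{x ∈ E} ‖φ(t, x) − φ_∞(x)‖ ≤ (C/c)·e^{−c·t} for all t ≥ 0; in particular, the flow maps φ(t, ·) converge uniformly and exponentially fast to the limit map φ_∞. -/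

import Mathlib

/-!
The trajectory `t ↦ φ t x` has speed at most `C·exp (−c·t)`, so between times `s ≤ t` it moves by
at most `∫_s^t C·exp (−c·r) dr = (C/c)·(exp (−c·s) − exp (−c·t)) ≤ (C/c)·exp (−c·s)`
(`norm_sub_le_of_exp_decay_speed`). This tail bound tends to `0`, so each trajectory is Cauchy and
converges by completeness of `E`; letting `t → ∞` in the estimate bounds the distance to the limit
by the same quantity, which does not depend on `x`.

The increment bound is obtained from a mean value inequality for norms rather than by integrating,
since `V` is not assumed continuous or even measurable in time.
-/

open Filter Topology Set

theorem norm_sub_le_of_exp_decay_speed {E : Type*} [NormedAddCommGroup E] [NormedSpace ℝ E]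
    {c C : ℝ} (hc : 0 < c) (hC : 0 < C) {γ γ' : ℝ → E}
    (hγ : ∀ t ≥ (0 : ℝ), HasDerivWithinAt γ (γ' t) (Ici 0) t)
    (hγ' : ∀ t ≥ (0 : ℝ), ‖γ' t‖ ≤ C * Real.exp (-c * t))
    {s t : ℝ} (hs : 0 ≤ s) (hst : s ≤ t) :
    ‖γ t - γ s‖ ≤ (C / c) * Real.exp (-c * s) := by
  have hB : ∀ r : ℝ, HasDerivAt
      (fun r => (C / c) * (Real.exp (-c * s) - Real.exp (-c * r))) (C * Real.exp (-c * r)) r := by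
    intro r
    have h := ((((hasDerivAt_id r).const_mul (-c)).exp).const_sub
      (Real.exp (-c * s))).const_mul (C / c)
    refine h.congr_deriv ?_
    simp only [id]
    field_simp
  have key := image_norm_le_of_norm_deriv_right_le_deriv_boundary
    (f := fun r => γ r - γ s) (f' := γ') (a := s) (b := t)
    (fun r hr => (((hγ r (hs.trans hr.1)).continuousWithinAt).mono
      (fun u hu => hs.trans hu.1)).sub continuousWithinAt_const)
    (fun r hr => ((hγ r (hs.trans hr.1)).mono
      (Ici_subset_Ici.2 (hs.trans hr.1))).sub_const _)
    (by simp) hB (fun r hr => hγ' r (hs.trans hr.1)) (right_mem_Icc.2 hst)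
  refine key.trans ?_
  gcongr
  linarith [Real.exp_pos (-c * t)]


/-- Let `E` be a real Banach space, `V : ℝ → E → E` a time-dependent vector
field with `‖V t x‖ ≤ C·exp (−c·t)` for all `t ≥ 0`, `x ∈ E`, where `c, C > 0`. If
`φ : [0,∞) × E → E` is a flow of `V` (i.e. `t ↦ φ t x` is differentiable with derivative
`V t (φ t x)` and `φ 0 x = x`), then there is a map `φ_∞ : E → E` with
`‖φ t x − φ_∞ x‖ ≤ (C/c)·exp (−c·t)` for all `t ≥ 0` and all `x`, uniformly in `x`. -/
theorem flow_of_exp_decay_field_tendsto_limit_map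
    {E : Type*} [NormedAddCommGroup E] [NormedSpace ℝ E] [CompleteSpace E]
    (c C : ℝ) (hc : 0 < c) (hC : 0 < C) (V : ℝ → E → E) (φ : ℝ → E → E)
    (hV : ∀ t ≥ (0 : ℝ), ∀ x : E, ‖V t x‖ ≤ C * Real.exp (-c * t))
    (hflow : ∀ x : E, ∀ t ≥ (0 : ℝ),
      HasDerivWithinAt (fun s => φ s x) (V t (φ t x)) (Set.Ici 0) t)
    (hinit : ∀ x : E, φ 0 x = x) :
    ∃ φInf : E → E, ∀ t ≥ (0 : ℝ), ∀ x : E,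
      ‖φ t x - φInf x‖ ≤ (C / c) * Real.exp (-c * t) := by
  have hinc : ∀ x : E, ∀ s t : ℝ, 0 ≤ s → s ≤ t →
      ‖φ t x - φ s x‖ ≤ (C / c) * Real.exp (-c * s) := fun x s t hs hst =>
    norm_sub_le_of_exp_decay_speed (γ := fun r => φ r x) hc hC (hflow x)
      (fun r hr => hV r hr (φ r x)) hs hst
  have hlim : Tendsto (fun n : ℕ => (C / c) * Real.exp (-c * (n : ℝ))) atTop (𝓝 0) := by
    rw [← mul_zero (C / c)]
    refine (Real.tendsto_exp_atBot.comp ?_).const_mul _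
    exact tendsto_natCast_atTop_atTop.const_mul_atTop_of_neg (neg_neg_of_pos hc)
  -- Integer times suffice to define the limit.
  have hcau : ∀ x : E, CauchySeq (fun n : ℕ => φ n x) := fun x =>
    cauchySeq_of_le_tendsto_0' _ (fun n m hnm => by
      rw [dist_comm, dist_eq_norm]
      exact hinc x n m n.cast_nonneg (Nat.cast_le.2 hnm)) hlim
  choose φInf hφInf using fun x => cauchySeq_tendsto_of_complete (hcau x)
  refine ⟨φInf, fun t ht x => le_of_tendsto ((hφInf x).const_sub (φ t x)).norm ?_⟩
  filter_upwards [tendsto_natCast_atTop_atTop.eventually_ge_atTop t] with n hn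
  rw [norm_sub_rev]
  exact hinc x t n ht hn
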